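/- (One-step sifting identity of 1-D AFD.) Let f ∈ H²(𝔻) and a ∈ 𝔻. Then: (i) ⟨f, e_a⟩ = √(1−|a|²) f(a) (reproducing property); (ii) the function h(z) = (f(z) − ⟨f, e_a⟩ e_a(z)) · (1−conj(a)z)/(z−a) extends holomorphically across z = a and belongs to H²(𝔻); and (iii) ‖f‖² = (1−|a|²)|f(a)|² + ‖h‖², where norms and inner products are those of the boundary values in L²(𝕋). -/

import Mathlib

open MeasureTheory Real Complex Filter

noncomputable section

/-- The point `e^{it}` on the unit circle. -/
def bp (t : ℝ) : ℂ := Complex.exp (Complex.I * t)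

/-- The normalized Szegő kernel. -/
def szego (a z : ℂ) : ℂ := (Real.sqrt (1 - ‖a‖ ^ 2) : ℂ) / (1 - (starRingEnd ℂ) a * z)

/-- Membership in the Hardy space `H²(𝔻)`: `F` is holomorphic on the unit disc and its
circle means `(1/2π)∫₀^{2π} ‖F(r e^{it})‖² dt`, `0 ≤ r < 1`, are uniformly bounded. -/
def IsH2D (F : ℂ → ℂ) : Prop :=
  DifferentiableOn ℂ F (Metric.ball 0 1) ∧
    BddAbove (Set.range fun r : Set.Ico (0 : ℝ) 1 =>
      (1 / (2 * π)) * ∫ t in (0:ℝ)..(2 * π), ‖F (((r : ℝ) : ℂ) * bp t)‖ ^ 2)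

/-- The squared `H²(𝔻)` norm, `sup_{0≤r<1} (1/2π)∫₀^{2π} ‖F(r e^{it})‖² dt`, which equals
the squared `L²(𝕋)` norm of the boundary values of `F`. -/
def H2NormSq (F : ℂ → ℂ) : ℝ :=
  ⨆ r : Set.Ico (0 : ℝ) 1,
    (1 / (2 * π)) * ∫ t in (0:ℝ)..(2 * π), ‖F (((r : ℝ) : ℂ) * bp t)‖ ^ 2

open Metric Set
open scoped Topology ComplexConjugate

/-!
On `𝕋` the Möbius factor `(z - a) / (1 - conj a * z)` is unimodular, so dividing the remainder
`g = f - ⟨f, e_a⟩ e_a` by it keeps the norm, and `g ⟂ e_a` because `g a = 0`. No boundary values are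
needed: the squared norm is the limit of the means of `‖f‖²` over `‖z‖ = r` as `r → 1⁻`. On such a
circle the pairing with `e_a` is computed by Cauchy's formula, and
`‖1 - conj a * z‖² - ‖z - a‖² = (1 - r²)(1 - ‖a‖²)` tends to `0` uniformly. That the limit of the
means is their supremum is Hardy's monotonicity theorem: a holomorphic `f` is dominated in norm by
the Poisson integral `u` of `‖f‖` over a larger circle, and `u` has the mean value property.
-/

section Monotonicity

variable {E : Type*} [NormedAddCommGroup E] [NormedSpace ℂ E]

theorem norm_circleAverage_le (f : ℂ → E) (c : ℂ) (R : ℝ) :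
    ‖circleAverage f c R‖ ≤ circleAverage (fun z => ‖f z‖) c R := by
  rw [circleAverage_def, circleAverage_def, norm_smul, smul_eq_mul,
    Real.norm_of_nonneg (inv_pos.2 two_pi_pos).le]
  gcongr
  exact intervalIntegral.norm_integral_le_integral_norm two_pi_pos.le

variable [CompleteSpace E] {f : ℂ → E} {R : ℝ}

theorem norm_le_circleAverage_re_herglotzRieszKernel_smul_norm (hf : DiffContOnCl ℂ f (ball 0 R))
    {w : ℂ} (hw : w ∈ ball 0 R) :
    ‖f w‖ ≤ circleAverage ((re ∘ herglotzRieszKernel 0 w) • fun z => ‖f z‖) 0 R := by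
  have hR : 0 < R := pos_of_mem_ball hw
  calc ‖f w‖ = ‖circleAverage ((re ∘ herglotzRieszKernel 0 w) • f) 0 R‖ := by
        rw [hf.circleAverage_re_herglotzRieszKernel_smul hw]
    _ ≤ circleAverage (fun z => ‖((re ∘ herglotzRieszKernel 0 w) • f) z‖) 0 R :=
        norm_circleAverage_le _ _ _
    _ = circleAverage ((re ∘ herglotzRieszKernel 0 w) • fun z => ‖f z‖) 0 R := by
        refine circleAverage_congr_sphere fun z hz => ?_
        rw [abs_of_pos hR] at hz
        have hkernel : 0 ≤ (herglotzRieszKernel 0 w z).re := by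
          refine le_trans ?_ (le_re_herglotzRieszKernel hz hw)
          have := mem_ball_iff_norm.1 hw
          exact div_nonneg (by linarith) (by positivity)
        simp [norm_smul, abs_of_nonneg hkernel]

theorem circleAverage_norm_mono_radius (hf : DiffContOnCl ℂ f (ball 0 R)) {r : ℝ}
    (hr : |r| < R) : circleAverage (fun z => ‖f z‖) 0 r ≤ circleAverage (fun z => ‖f z‖) 0 R := by
  have hR : 0 < R := (abs_nonneg r).trans_lt hr
  have hsphere : ContinuousOn (fun z => ‖f z‖) (sphere 0 R) :=
    (hf.continuousOn_ball.mono sphere_subset_closedBall).norm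
  have hball : closedBall (0 : ℂ) |r| ⊆ ball 0 R := closedBall_subset_ball hr
  set H : ℂ → ℂ := fun w => circleAverage (fun z => herglotzRieszKernel 0 w z • (‖f z‖ : ℂ)) 0 R
  have hH : DifferentiableOn ℂ H (ball 0 R) :=
    differentiableOn_circleAverage_herglotzRieszKernel_smul
      ((continuous_ofReal.comp_continuousOn hsphere).circleIntegrable hR.le)
  have hHr : ContinuousOn H (sphere 0 |r|) :=
    hH.continuousOn.mono (sphere_subset_closedBall.trans hball)
  have hHre : ∀ w ∈ ball (0 : ℂ) R,
      (H w).re = circleAverage ((re ∘ herglotzRieszKernel 0 w) • fun z => ‖f z‖) 0 R := fun w hw =>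
    re_circleAverage_herglotzRieszKernel_smul (hsphere.circleIntegrable hR.le) hw
  have hfr : CircleIntegrable (fun z => ‖f z‖) 0 r :=
    (hf.continuousOn.mono (sphere_subset_closedBall.trans
      (hball.trans subset_closure))).norm.circleIntegrable'
  calc circleAverage (fun z => ‖f z‖) 0 r ≤ circleAverage (reCLM ∘ H) 0 r := by
        refine circleAverage_mono hfr
          (continuous_re.comp_continuousOn hHr).circleIntegrable' fun w hw => ?_
        have hwR := hball (sphere_subset_closedBall hw)
        exact (norm_le_circleAverage_re_herglotzRieszKernel_smul_norm hf hwR).trans_eq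
          (hHre w hwR).symm
    _ = (H 0).re := by
        rw [reCLM.circleAverage_comp_comm hHr.circleIntegrable',
          (hH.diffContOnCl_ball hball).circleAverage, reCLM_apply]
    _ = circleAverage (fun z => ‖f z‖) 0 R := by
        rw [hHre 0 (mem_ball_self hR)]
        refine circleAverage_congr_sphere fun z hz => ?_
        have hz0 : z ≠ 0 := ne_of_mem_sphere hz (abs_pos.2 hR.ne').ne'
        simp [herglotzRieszKernel_def, hz0]

end Monotonicity

/-- The mean of `‖F‖²` over the circle of radius `r` centred at the origin. -/
def circleMeanSq (F : ℂ → ℂ) (r : ℝ) : ℝ :=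
  circleAverage (fun z => ‖F z‖ ^ 2) 0 r

/-- The `L²` pairing of `F` and `G`, conjugate-linear in `G`, over the circle of radius `r` centred
at the origin with its normalized arc length. -/
def circleInner (F G : ℂ → ℂ) (r : ℝ) : ℂ :=
  circleAverage (fun z => F z * conj (G z)) 0 r

section CircleMeans

variable {F G : ℂ → ℂ} {r : ℝ}

theorem circleMeanSq_nonneg (F : ℂ → ℂ) (r : ℝ) : 0 ≤ circleMeanSq F r :=
  circleAverage_nonneg_of_nonneg fun _ _ => sq_nonneg _

theorem circleInner_self (F : ℂ → ℂ) (r : ℝ) : circleInner F F r = circleMeanSq F r := by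
  simp [circleInner, circleMeanSq, circleAverage_def, mul_conj, normSq_eq_norm_sq,
    ← intervalIntegral.integral_ofReal]

theorem circleMeanSq_const_mul (c : ℂ) (F : ℂ → ℂ) (r : ℝ) :
    circleMeanSq (fun z => c * F z) r = ‖c‖ ^ 2 * circleMeanSq F r := by
  rw [circleMeanSq, circleMeanSq, ← smul_eq_mul, ← circleAverage_fun_smul]
  simp only [norm_mul, mul_pow, smul_eq_mul]

theorem circleInner_const_mul_right (c : ℂ) (F G : ℂ → ℂ) (r : ℝ) :
    circleInner F (fun z => c * G z) r = conj c * circleInner F G r := by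
  rw [circleInner, circleInner, ← smul_eq_mul, ← circleAverage_fun_smul]
  simp only [map_mul, mul_left_comm (F _), smul_eq_mul]

theorem circleMeanSq_add (hF : ContinuousOn F (sphere 0 |r|)) (hG : ContinuousOn G (sphere 0 |r|)) :
    circleMeanSq (fun z => F z + G z) r =
      circleMeanSq F r + circleMeanSq G r + 2 * (circleInner F G r).re := by
  have hFG : ContinuousOn (fun z => F z * conj (G z)) (sphere 0 |r|) :=
    hF.mul (continuous_conj.comp_continuousOn hG)
  have hre : circleAverage (fun z => (F z * conj (G z)).re) 0 r = (circleInner F G r).re :=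
    reCLM.circleAverage_comp_comm hFG.circleIntegrable'
  have hF' : CircleIntegrable (fun z => ‖F z‖ ^ 2) 0 r := (hF.norm.pow 2).circleIntegrable'
  have hG' : CircleIntegrable (fun z => ‖G z‖ ^ 2) 0 r := (hG.norm.pow 2).circleIntegrable'
  have hadd : CircleIntegrable (fun z => ‖F z‖ ^ 2 + ‖G z‖ ^ 2) 0 r := hF'.add hG'
  have hFG' : CircleIntegrable (fun z => (2 : ℝ) • (F z * conj (G z)).re) 0 r :=
    ((continuous_re.comp_continuousOn hFG).const_smul (2 : ℝ)).circleIntegrable'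
  calc circleMeanSq (fun z => F z + G z) r
      = circleAverage (fun z => ‖F z‖ ^ 2 + ‖G z‖ ^ 2 + (2 : ℝ) • (F z * conj (G z)).re) 0 r := by
        simp only [circleMeanSq, ← normSq_eq_norm_sq, normSq_add, smul_eq_mul]
    _ = _ := by
        rw [circleAverage_fun_add hadd hFG', circleAverage_fun_add hF' hG',
          circleAverage_fun_smul, hre, smul_eq_mul, circleMeanSq, circleMeanSq]

theorem circleMeanSq_le_circleMeanSq {R : ℝ} (hF : DiffContOnCl ℂ F (ball 0 R)) (hr : |r| < R) :
    circleMeanSq F r ≤ circleMeanSq F R := by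
  simpa only [circleMeanSq, ← norm_pow, smul_eq_mul, ← sq] using
    circleAverage_norm_mono_radius (hF.smul hF) hr

theorem circleMeanSq_monotoneOn {R : ℝ} (hF : DifferentiableOn ℂ F (ball 0 R)) :
    MonotoneOn (circleMeanSq F) (Ico 0 R) := by
  rintro r ⟨hr, _⟩ s ⟨_, hs⟩ hrs
  obtain rfl | hrs := hrs.eq_or_lt
  · exact le_rfl
  · exact circleMeanSq_le_circleMeanSq (hF.diffContOnCl_ball (closedBall_subset_ball hs))
      (by rwa [abs_of_nonneg hr])

end CircleMeans

theorem bp_eq_circleMap (t : ℝ) : bp t = circleMap 0 1 t := by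
  simp [bp, circleMap, mul_comm]

theorem circleMeanSq_eq_integral_bp (F : ℂ → ℂ) (r : ℝ) :
    circleMeanSq F r = 1 / (2 * π) * ∫ t in (0 : ℝ)..(2 * π), ‖F (r * bp t)‖ ^ 2 := by
  simp [circleMeanSq, circleAverage_def, bp_eq_circleMap, circleMap]

theorem circleInner_one_eq_integral_bp (F G : ℂ → ℂ) :
    circleInner F G 1 =
      1 / (2 * (π : ℂ)) * ∫ t in (0 : ℝ)..(2 * π), F (bp t) * conj (G (bp t)) := by
  simp [circleInner, circleAverage_def, bp_eq_circleMap, real_smul]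

theorem isH2D_and_H2NormSq_eq_iff {F : ℂ → ℂ} (hF : DifferentiableOn ℂ F (ball 0 1)) {L : ℝ} :
    IsH2D F ∧ H2NormSq F = L ↔ Tendsto (circleMeanSq F) (𝓝[<] 1) (𝓝 L) := by
  have hmono : Monotone fun r : Ico (0 : ℝ) 1 => circleMeanSq F r := fun r s hrs =>
    circleMeanSq_monotoneOn hF r.2 s.2 hrs
  have : Nonempty (Ico (0 : ℝ) 1) := ⟨0, by simp⟩
  have hatTop : map ((↑) : Ico (0 : ℝ) 1 → ℝ) atTop = 𝓝[<] 1 :=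
    map_coe_atTop_of_Ioo_subset (fun _ hr => hr.2) fun _ _ =>
      ⟨0, zero_lt_one, Ioo_subset_Ico_self⟩
  simp only [IsH2D, H2NormSq, ← circleMeanSq_eq_integral_bp, ← hatTop, tendsto_map'_iff]
  constructor
  · rintro ⟨⟨-, hbdd⟩, rfl⟩
    exact tendsto_atTop_ciSup hmono hbdd
  · intro hL
    have hlub := isLUB_of_tendsto_atTop hmono hL
    exact ⟨⟨hF, hlub.bddAbove⟩, hlub.ciSup_eq⟩

section Szego

variable {a : ℂ}

theorem one_sub_conj_mul_ne_zero {z : ℂ} (h : ‖z‖ * ‖a‖ < 1) : 1 - conj a * z ≠ 0 := by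
  intro h0
  have : ‖conj a * z‖ = 1 := by rw [← sub_eq_zero.1 h0, norm_one]
  rw [norm_mul, RCLike.norm_conj, mul_comm] at this
  exact h.ne this

theorem differentiableOn_szego (ha : ‖a‖ < 1) : DifferentiableOn ℂ (szego a) (ball 0 1) := by
  refine (differentiableOn_const _).div (by fun_prop) fun z hz => one_sub_conj_mul_ne_zero ?_
  exact mul_lt_one_of_nonneg_of_lt_one_left (norm_nonneg z) (mem_ball_zero_iff.1 hz) ha.le

theorem sqrt_mul_szego_self (ha : ‖a‖ < 1) : (√(1 - ‖a‖ ^ 2) : ℂ) * szego a a = 1 := by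
  have hpos : 0 < 1 - ‖a‖ ^ 2 := sub_pos.2 (pow_lt_one₀ (norm_nonneg a) ha two_ne_zero)
  have hden : 1 - conj a * a = ((1 - ‖a‖ ^ 2 : ℝ) : ℂ) := by
    rw [mul_comm, mul_conj, normSq_eq_norm_sq, ofReal_sub, ofReal_one]
  rw [szego, hden, ← mul_div_assoc, ← ofReal_mul, Real.mul_self_sqrt hpos.le,
    div_self (ofReal_ne_zero.2 hpos.ne')]

-- On `‖z‖ = r` one has `conj z = r ^ 2 / z`, which turns the pairing into Cauchy's formula
-- at `r ^ 2 * a`.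
theorem circleInner_szego {G : ℂ → ℂ} {r : ℝ} (hG : DiffContOnCl ℂ G (ball 0 |r|))
    (har : |r| * ‖a‖ < 1) :
    circleInner G (szego a) r = (√(1 - ‖a‖ ^ 2) : ℂ) * G ((r : ℂ) ^ 2 * a) := by
  obtain rfl | hr := eq_or_ne r 0
  · simp [circleInner, szego, mul_comm]
  have hmem : (r : ℂ) ^ 2 * a ∈ ball (0 : ℂ) |r| := by
    have := mul_lt_mul_of_pos_left har (abs_pos.2 hr)
    simpa [pow_two, mul_assoc] using this
  rw [circleInner, ← hG.circleAverage_smul_div hmem, ← smul_eq_mul, ← circleAverage_fun_smul]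
  refine circleAverage_congr_sphere fun z hz => ?_
  rw [mem_sphere_zero_iff_norm] at hz
  have hz0 : z ≠ 0 := norm_pos_iff.1 (hz ▸ abs_pos.2 hr)
  have hzz : (r : ℂ) ^ 2 = z * conj z := by
    rw [mul_conj, normSq_eq_norm_sq, hz, sq_abs, ofReal_pow]
  have hden : 1 - a * conj z ≠ 0 := by
    simpa using (map_ne_zero (starRingEnd ℂ)).2 (one_sub_conj_mul_ne_zero (hz.symm ▸ har))
  have hsub : z - z * conj z * a = z * (1 - a * conj z) := by ring
  simp only [szego, map_div₀, map_sub, map_mul, map_one, conj_conj, conj_ofReal, smul_eq_mul,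
    sub_zero, hzz, hsub]
  field_simp

theorem tendsto_const_mul_comp_mul {G : ℂ → ℂ} (hG : DifferentiableOn ℂ G (ball 0 1))
    (ha : ‖a‖ < 1) {u : ℝ → ℂ} (hu : Continuous u) (hu1 : u 1 = 1) (c : ℂ) :
    Tendsto (fun r => c * G (u r * a)) (𝓝[<] 1) (𝓝 (c * G a)) := by
  have hGa : ContinuousAt G a :=
    (hG.differentiableAt (isOpen_ball.mem_nhds (mem_ball_zero_iff.2 ha))).continuousAt
  have hua : Tendsto (fun r => u r * a) (𝓝[<] 1) (𝓝 a) :=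
    (Continuous.tendsto' (by fun_prop) _ _ (by simp [hu1])).mono_left nhdsWithin_le_nhds
  exact (hGa.tendsto.comp hua).const_mul c

theorem tendsto_circleInner_szego {G : ℂ → ℂ} (hG : DifferentiableOn ℂ G (ball 0 1))
    (ha : ‖a‖ < 1) :
    Tendsto (circleInner G (szego a)) (𝓝[<] 1) (𝓝 ((√(1 - ‖a‖ ^ 2) : ℂ) * G a)) := by
  refine (tendsto_const_mul_comp_mul hG ha (u := fun r => (r : ℂ) ^ 2) (by fun_prop) (by simp)
    _).congr' ?_
  filter_upwards [Ioo_mem_nhdsLT zero_lt_one] with r hr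
  have hr1 : |r| < 1 := (abs_of_pos hr.1).trans_lt hr.2
  exact (circleInner_szego (hG.diffContOnCl_ball (closedBall_subset_ball hr1))
    (mul_lt_one_of_nonneg_of_lt_one_left (abs_nonneg r) hr1 ha.le)).symm

theorem tendsto_circleInner_dilation_szego {F : ℂ → ℂ} (hF : DifferentiableOn ℂ F (ball 0 1))
    (ha : ‖a‖ < 1) :
    Tendsto (fun r : ℝ => circleInner (fun z => F (r * z)) (szego a) 1) (𝓝[<] 1)
      (𝓝 ((√(1 - ‖a‖ ^ 2) : ℂ) * F a)) := by
  refine (tendsto_const_mul_comp_mul hF ha continuous_ofReal ofReal_one _).congr' ?_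
  filter_upwards [Ioo_mem_nhdsLT zero_lt_one] with r hr
  have hmaps : MapsTo (fun z : ℂ => r * z) (closedBall 0 |1|) (ball 0 1) := fun z hz => by
    rw [mem_closedBall_zero_iff, abs_one] at hz
    simpa [abs_of_pos hr.1] using mul_lt_one_of_nonneg_of_lt_one_left hr.1.le hr.2 hz
  have hFr : DiffContOnCl ℂ (fun z => F (r * z)) (ball 0 |1|) :=
    (hF.comp (by fun_prop) hmaps).diffContOnCl_ball Subset.rfl
  simpa using (circleInner_szego hFr (by simpa using ha)).symm

theorem tendsto_circleMeanSq_szego (ha : ‖a‖ < 1) :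
    Tendsto (circleMeanSq (szego a)) (𝓝[<] 1) (𝓝 1) := by
  have hself := tendsto_circleInner_szego (differentiableOn_szego ha) ha
  simpa only [Function.comp_def, circleInner_self, ofReal_re, sqrt_mul_szego_self ha, one_re] using
    (continuous_re.tendsto _).comp hself

end Szego

section MoebiusFactor

variable {d : ℂ → ℂ} {a : ℂ} {r : ℝ}

theorem norm_one_sub_conj_mul_sq (a z : ℂ) :
    ‖1 - conj a * z‖ ^ 2 = ‖z - a‖ ^ 2 + (1 - ‖z‖ ^ 2) * (1 - ‖a‖ ^ 2) := by
  simp only [← normSq_eq_norm_sq, normSq_apply, sub_re, sub_im, mul_re, mul_im, one_re, one_im,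
    conj_re, conj_im]
  ring

theorem circleMeanSq_mul_one_sub_conj_mul (hd : ContinuousOn d (sphere 0 |r|)) (a : ℂ) :
    circleMeanSq (fun z => d z * (1 - conj a * z)) r =
      circleMeanSq (fun z => d z * (z - a)) r +
        (1 - r ^ 2) * (1 - ‖a‖ ^ 2) * circleMeanSq d r := by
  have hint : CircleIntegrable (fun z => ‖d z * (z - a)‖ ^ 2) 0 r :=
    ((hd.mul (by fun_prop)).norm.pow 2).circleIntegrable'
  have hint' : CircleIntegrable (fun z => ((1 - r ^ 2) * (1 - ‖a‖ ^ 2)) • ‖d z‖ ^ 2) 0 r :=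
    ((hd.norm.pow 2).const_smul ((1 - r ^ 2) * (1 - ‖a‖ ^ 2))).circleIntegrable'
  rw [circleMeanSq, circleMeanSq, circleMeanSq, ← smul_eq_mul _ (circleAverage _ 0 r),
    ← circleAverage_fun_smul, ← circleAverage_fun_add hint hint']
  refine circleAverage_congr_sphere fun z hz => ?_
  rw [mem_sphere_zero_iff_norm] at hz
  simp only [norm_mul, mul_pow, norm_one_sub_conj_mul_sq, hz, sq_abs, smul_eq_mul]
  ring

theorem sq_mul_circleMeanSq_le (hd : ContinuousOn d (sphere 0 |r|)) (har : ‖a‖ ≤ |r|) :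
    (|r| - ‖a‖) ^ 2 * circleMeanSq d r ≤ circleMeanSq (fun z => d z * (z - a)) r := by
  rw [circleMeanSq, circleMeanSq, ← smul_eq_mul, ← circleAverage_fun_smul]
  refine circleAverage_mono ((hd.norm.pow 2).const_smul ((|r| - ‖a‖) ^ 2)).circleIntegrable'
    ((hd.mul (by fun_prop)).norm.pow 2).circleIntegrable' fun z hz => ?_
  rw [mem_sphere_zero_iff_norm] at hz
  rw [smul_eq_mul, norm_mul, mul_pow, mul_comm, ← hz]
  gcongr
  · rwa [hz, sub_nonneg]
  · exact norm_sub_norm_le z a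

theorem tendsto_circleMeanSq_mul_one_sub_conj_mul (hd : ContinuousOn d (ball 0 1)) (ha : ‖a‖ < 1)
    {L : ℝ} (hL : Tendsto (circleMeanSq fun z => d z * (z - a)) (𝓝[<] 1) (𝓝 L)) :
    Tendsto (circleMeanSq fun z => d z * (1 - conj a * z)) (𝓝[<] 1) (𝓝 L) := by
  have hA : 0 ≤ 1 - ‖a‖ ^ 2 := sub_nonneg.2 (pow_le_one₀ (norm_nonneg a) ha.le)
  have hsphere : ∀ r ∈ Ioo ‖a‖ 1, ContinuousOn d (sphere 0 |r|) := fun r hr =>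
    hd.mono (sphere_subset_ball ((abs_of_pos ((norm_nonneg a).trans_lt hr.1)).trans_lt hr.2))
  have herror : Tendsto (fun r => (1 - r ^ 2) * (1 - ‖a‖ ^ 2) * circleMeanSq d r) (𝓝[<] 1)
      (𝓝 0) := by
    have hbound : Tendsto (fun r => (1 - r ^ 2) * (1 - ‖a‖ ^ 2) *
        (circleMeanSq (fun z => d z * (z - a)) r / (r - ‖a‖) ^ 2)) (𝓝[<] 1) (𝓝 0) := by
      have hne : ((1 : ℝ) - ‖a‖) ^ 2 ≠ 0 := pow_ne_zero _ (sub_pos.2 ha).ne'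
      have hnum : Tendsto (fun r : ℝ => (1 - r ^ 2) * (1 - ‖a‖ ^ 2)) (𝓝[<] 1) (𝓝 0) :=
        (Continuous.tendsto' (by fun_prop) _ _ (by simp)).mono_left nhdsWithin_le_nhds
      have hden : Tendsto (fun r : ℝ => (r - ‖a‖) ^ 2) (𝓝[<] 1) (𝓝 ((1 - ‖a‖) ^ 2)) :=
        (Continuous.tendsto (by fun_prop) _).mono_left nhdsWithin_le_nhds
      simpa using hnum.mul (hL.div hden hne)
    refine tendsto_of_tendsto_of_tendsto_of_le_of_le' tendsto_const_nhds hbound ?_ ?_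
    all_goals
      filter_upwards [Ioo_mem_nhdsLT ha] with r hr
      have hr0 : 0 < r := (norm_nonneg a).trans_lt hr.1
      have hR : 0 ≤ 1 - r ^ 2 := sub_nonneg.2 (pow_le_one₀ hr0.le hr.2.le)
    · exact mul_nonneg (mul_nonneg hR hA) (circleMeanSq_nonneg d r)
    · gcongr
      rw [le_div_iff₀ (pow_pos (sub_pos.2 hr.1) 2), mul_comm]
      simpa only [abs_of_pos hr0] using
        sq_mul_circleMeanSq_le (hsphere r hr) (hr.1.le.trans (le_abs_self r))
  refine (add_zero L ▸ hL.add herror).congr' ?_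
  filter_upwards [Ioo_mem_nhdsLT ha] with r hr
  exact (circleMeanSq_mul_one_sub_conj_mul (hsphere r hr) a).symm

end MoebiusFactor

/-- The component `F - ⟨F, e_a⟩ e_a` of `F` orthogonal to the Szegő kernel `e_a`, with the
coefficient written as `√(1 - ‖a‖²) F(a)`. -/
def szegoRemainder (F : ℂ → ℂ) (a z : ℂ) : ℂ :=
  F z - (√(1 - ‖a‖ ^ 2) * F a) * szego a z

/-- The reduced remainder of `F` at `a`: the remainder divided by the Möbius factor
`(z - a) / (1 - conj a * z)`. The use of `dslope` fills in the removable singularity at `a`. -/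
def reducedRemainder (F : ℂ → ℂ) (a z : ℂ) : ℂ :=
  dslope (szegoRemainder F a) a z * (1 - conj a * z)

section Sifting

variable {F : ℂ → ℂ} {a : ℂ}

theorem szegoRemainder_self (F : ℂ → ℂ) (ha : ‖a‖ < 1) : szegoRemainder F a a = 0 := by
  rw [szegoRemainder, mul_right_comm, sqrt_mul_szego_self ha, one_mul, sub_self]

theorem dslope_szegoRemainder_mul_sub (F : ℂ → ℂ) (ha : ‖a‖ < 1) (z : ℂ) :
    dslope (szegoRemainder F a) a z * (z - a) = szegoRemainder F a z := by
  rw [mul_comm, ← smul_eq_mul, sub_smul_dslope, szegoRemainder_self F ha, sub_zero]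

theorem reducedRemainder_of_ne (F : ℂ → ℂ) (ha : ‖a‖ < 1) {z : ℂ} (hz : z ≠ a) :
    reducedRemainder F a z = szegoRemainder F a z * (1 - conj a * z) / (z - a) := by
  rw [eq_div_iff (sub_ne_zero.2 hz), reducedRemainder, mul_right_comm,
    dslope_szegoRemainder_mul_sub F ha]

theorem differentiableOn_szegoRemainder (hF : DifferentiableOn ℂ F (ball 0 1)) (ha : ‖a‖ < 1) :
    DifferentiableOn ℂ (szegoRemainder F a) (ball 0 1) :=
  hF.sub ((differentiableOn_szego ha).const_mul _)

theorem differentiableOn_dslope_szegoRemainder (hF : DifferentiableOn ℂ F (ball 0 1))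
    (ha : ‖a‖ < 1) : DifferentiableOn ℂ (dslope (szegoRemainder F a) a) (ball 0 1) :=
  (differentiableOn_dslope (isOpen_ball.mem_nhds (mem_ball_zero_iff.2 ha))).2
    (differentiableOn_szegoRemainder hF ha)

theorem differentiableOn_reducedRemainder (hF : DifferentiableOn ℂ F (ball 0 1)) (ha : ‖a‖ < 1) :
    DifferentiableOn ℂ (reducedRemainder F a) (ball 0 1) :=
  (differentiableOn_dslope_szegoRemainder hF ha).mul (by fun_prop)

theorem tendsto_circleMeanSq_szegoRemainder (hF : DifferentiableOn ℂ F (ball 0 1)) (ha : ‖a‖ < 1)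
    {L : ℝ} (hL : Tendsto (circleMeanSq F) (𝓝[<] 1) (𝓝 L)) :
    Tendsto (circleMeanSq (szegoRemainder F a)) (𝓝[<] 1)
      (𝓝 (L - (1 - ‖a‖ ^ 2) * ‖F a‖ ^ 2)) := by
  set c : ℂ := √(1 - ‖a‖ ^ 2) * F a with hc
  have hg := differentiableOn_szegoRemainder hF ha
  have hS := differentiableOn_szego ha
  have hnorm : ‖c‖ ^ 2 = (1 - ‖a‖ ^ 2) * ‖F a‖ ^ 2 := by
    rw [hc, norm_mul, mul_pow, norm_real, Real.norm_eq_abs, sq_abs,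
      Real.sq_sqrt (sub_nonneg.2 (pow_le_one₀ (norm_nonneg a) ha.le))]
  have hprojection : Tendsto (circleMeanSq fun z => c * szego a z) (𝓝[<] 1) (𝓝 (‖c‖ ^ 2)) := by
    rw [← mul_one (‖c‖ ^ 2)]
    exact ((tendsto_circleMeanSq_szego ha).const_mul _).congr fun r =>
      (circleMeanSq_const_mul c (szego a) r).symm
  have horthogonal : Tendsto (circleInner (szegoRemainder F a) fun z => c * szego a z) (𝓝[<] 1)
      (𝓝 0) := by
    simpa only [← circleInner_const_mul_right, szegoRemainder_self F ha, mul_zero] using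
      (tendsto_circleInner_szego hg ha).const_mul (conj c)
  have hcross := ((continuous_re.tendsto _).comp horthogonal).const_mul 2
  rw [← hnorm, ← sub_zero (L - ‖c‖ ^ 2), ← mul_zero (2 : ℝ), ← zero_re]
  refine ((hL.sub hprojection).sub hcross).congr' ?_
  filter_upwards [Ioo_mem_nhdsLT zero_lt_one] with r hr
  have hsub : sphere (0 : ℂ) |r| ⊆ ball 0 1 :=
    sphere_subset_ball ((abs_of_pos hr.1).trans_lt hr.2)
  have hpolar := circleMeanSq_add (hg.continuousOn.mono hsub)
    ((hS.const_mul c).continuousOn.mono hsub)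
  have hsum : (fun z => szegoRemainder F a z + c * szego a z) = F :=
    funext fun z => sub_add_cancel (F z) (c * szego a z)
  rw [hsum] at hpolar
  simp only [Function.comp_apply]
  linarith

theorem tendsto_circleMeanSq_reducedRemainder (hF : DifferentiableOn ℂ F (ball 0 1))
    (ha : ‖a‖ < 1) {L : ℝ} (hL : Tendsto (circleMeanSq F) (𝓝[<] 1) (𝓝 L)) :
    Tendsto (circleMeanSq (reducedRemainder F a)) (𝓝[<] 1)
      (𝓝 (L - (1 - ‖a‖ ^ 2) * ‖F a‖ ^ 2)) := by
  refine tendsto_circleMeanSq_mul_one_sub_conj_mul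
    (differentiableOn_dslope_szegoRemainder hF ha).continuousOn ha ?_
  simpa only [dslope_szegoRemainder_mul_sub F ha] using
    tendsto_circleMeanSq_szegoRemainder hF ha hL

end Sifting

/-- one-step sifting identity of 1-D AFD: for `f ∈ H²(𝔻)` and `a ∈ 𝔻`,
(i) `⟨f, e_a⟩ = √(1-|a|²) f(a)` (the boundary inner product, realized as the limit of the
circle pairings as `r → 1⁻`); (ii) `h(z) = (f(z) - ⟨f,e_a⟩e_a(z))(1 - conj(a)z)/(z-a)`
extends holomorphically across `z = a` and lies in `H²(𝔻)`; and
(iii) `‖f‖² = (1-|a|²)|f(a)|² + ‖h‖²`. -/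
theorem oneD_AFD_sifting (F : ℂ → ℂ) (hF : IsH2D F) (a : ℂ) (ha : ‖a‖ < 1) :
    Filter.Tendsto
      (fun r : ℝ => (1 / (2 * (π : ℂ))) *
        ∫ t in (0:ℝ)..(2 * π), F ((r : ℂ) * bp t) * (starRingEnd ℂ) (szego a (bp t)))
      (nhdsWithin 1 (Set.Iio 1))
      (nhds ((Real.sqrt (1 - ‖a‖ ^ 2) : ℂ) * F a)) ∧
    ∃ h : ℂ → ℂ,
      DifferentiableOn ℂ h (Metric.ball 0 1) ∧ IsH2D h ∧
      (∀ z ∈ Metric.ball (0 : ℂ) 1, z ≠ a →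
        h z = (F z - ((Real.sqrt (1 - ‖a‖ ^ 2) : ℂ) * F a) * szego a z) *
          (1 - (starRingEnd ℂ) a * z) / (z - a)) ∧
      H2NormSq F = (1 - ‖a‖ ^ 2) * ‖F a‖ ^ 2 + H2NormSq h := by
  have hh := differentiableOn_reducedRemainder hF.1 ha
  obtain ⟨hH2, hnorm⟩ := (isH2D_and_H2NormSq_eq_iff hh).2 <|
    tendsto_circleMeanSq_reducedRemainder hF.1 ha ((isH2D_and_H2NormSq_eq_iff hF.1).1 ⟨hF, rfl⟩)
  refine ⟨?_, reducedRemainder F a, hh, hH2, fun z _ hz => reducedRemainder_of_ne F ha hz, ?_⟩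
  · simpa only [circleInner_one_eq_integral_bp] using tendsto_circleInner_dilation_szego hF.1 ha
  · rw [hnorm, add_sub_cancel]
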